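/- arXiv:math/0512520 — 5 statements merged into one kernel-verified Lean document; each statement's English description precedes it below -/
import Mathlib

section
/- Let z ∈ k[X] satisfy d(z) = 0 and e(z) = w·z for some scalar w ∈ k. Then for every natural number i ≥ 1, d(d̂^i(z)) = i·(w − i + 1)·d̂^{i−1}(z). -/
open MvPolynomial Finset

/-- The Weitzenböck derivation `d` on `k[x_0,…,x_n]`: `d(x_i) = x_{i-1}` for
`1 ≤ i ≤ n` and `d(x_0) = 0`. -/
noncomputable def weitz (k : Type*) [Field k] [CharZero k] (n : ℕ) :
    Derivation k (MvPolynomial (Fin (n + 1)) k) (MvPolynomial (Fin (n + 1)) k) :=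
  mkDerivation k (fun i : Fin (n + 1) =>
    if _ : (i : ℕ) = 0 then 0
    else X (⟨(i : ℕ) - 1, by have := i.isLt; omega⟩ : Fin (n + 1)))

/-- The derivation `d̂` on `k[x_0,…,x_n]`: `d̂(x_i) = (i+1)(n−i)·x_{i+1}` for
`0 ≤ i ≤ n−1` and `d̂(x_n) = 0`. -/
noncomputable def dhat (k : Type*) [Field k] [CharZero k] (n : ℕ) :
    Derivation k (MvPolynomial (Fin (n + 1)) k) (MvPolynomial (Fin (n + 1)) k) :=
  mkDerivation k (fun i : Fin (n + 1) =>
    if h : (i : ℕ) = n then 0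
    else ((((i : ℕ) + 1) * (n - (i : ℕ)) : ℕ) : k) •
      X (⟨(i : ℕ) + 1, by have := i.isLt; omega⟩ : Fin (n + 1)))

/-- The derivation `e` on `k[x_0,…,x_n]`: `e(x_i) = (n−2i)·x_i`. -/
noncomputable def ee (k : Type*) [Field k] [CharZero k] (n : ℕ) :
    Derivation k (MvPolynomial (Fin (n + 1)) k) (MvPolynomial (Fin (n + 1)) k) :=
  mkDerivation k (fun i : Fin (n + 1) => ((n : ℤ) - 2 * (i : ℕ)) • X i)

theorem weitz_dhat_comm (k : Type*) [Field k] [CharZero k] (n : ℕ) :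
    ⁅weitz k n, dhat k n⁆ = ee k n := by
  apply MvPolynomial.derivation_ext
  rintro ⟨i, hi⟩
  rw [Derivation.commutator_apply]
  simp only [weitz, dhat, ee, mkDerivation_X]
  have hin : i ≤ n := by omega
  rcases Nat.eq_zero_or_pos i with h0 | h0
  · subst h0
    rcases Nat.eq_zero_or_pos n with hn | hn
    · subst hn
      simp
    · have hn' : ¬ (0 = n) := by omega
      simp only [hn', dite_true, dite_false, map_zero, Derivation.map_smul, mkDerivation_X]
      simp [MvPolynomial.smul_eq_C_mul]
  · obtain ⟨j, rfl⟩ : ∃ j, i = j + 1 := ⟨i - 1, by omega⟩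
    obtain ⟨m, rfl⟩ : ∃ m, n = j + 1 + m := ⟨n - (j + 1), by omega⟩
    have h1 : ¬ (j = j + 1 + m) := by omega
    have h2 : j + 1 + m - j = m + 1 := by omega
    have h3 : j + 1 + m - (j + 1) = m := by omega
    rcases Nat.eq_zero_or_pos m with hm | hm
    · subst hm
      simp [mkDerivation_X, MvPolynomial.smul_eq_C_mul]
      ring
    · have h4 : ¬ (j + 1 = j + 1 + m) := by omega
      simp only [h4, h1, h2, h3, Nat.add_sub_cancel, Nat.succ_ne_zero, dite_false,
        Derivation.map_smul, mkDerivation_X]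
      simp [MvPolynomial.smul_eq_C_mul]
      ring

theorem ee_dhat_comm (k : Type*) [Field k] [CharZero k] (n : ℕ) :
    ⁅ee k n, dhat k n⁆ = (-2 : k) • dhat k n := by
  apply MvPolynomial.derivation_ext
  rintro ⟨i, hi⟩
  rw [Derivation.commutator_apply, Derivation.smul_apply]
  simp only [dhat, ee, mkDerivation_X]
  by_cases h : i = n
  · simp only [h, dite_true, map_zero, Derivation.map_smul, map_zsmul, mkDerivation_X]
    simp
  · have hC : (C 2 : MvPolynomial (Fin (n + 1)) k) = 2 := map_ofNat C 2
    simp only [h, dite_false, map_zsmul, Derivation.map_smul, mkDerivation_X]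
    simp [MvPolynomial.smul_eq_C_mul, hC]
    ring

theorem ee_iterate (k : Type*) [Field k] [CharZero k] (n : ℕ)
    (z : MvPolynomial (Fin (n + 1)) k) (w : k)
    (he : ee k n z = w • z) (i : ℕ) :
    ee k n ((⇑(dhat k n))^[i] z) = (w - 2 * (i : k)) • (⇑(dhat k n))^[i] z := by
  induction i with
  | zero => simpa using he
  | succ i ih =>
    rw [Function.iterate_succ_apply']
    have h := congrArg (fun D => D ((⇑(dhat k n))^[i] z)) (ee_dhat_comm k n)
    simp only [Derivation.commutator_apply, Derivation.smul_apply, ih, Derivation.map_smul] at h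
    rw [sub_eq_iff_eq_add.mp h]
    push_cast
    module

theorem weitz_iterate_succ (k : Type*) [Field k] [CharZero k] (n : ℕ)
    (z : MvPolynomial (Fin (n + 1)) k) (w : k)
    (hd : weitz k n z = 0) (he : ee k n z = w • z) (i : ℕ) :
    weitz k n ((⇑(dhat k n))^[i + 1] z) =
      (((i : k) + 1) * (w - (i : k))) • (⇑(dhat k n))^[i] z := by
  have key : ∀ y, weitz k n (dhat k n y) = ee k n y + dhat k n (weitz k n y) := by
    intro y
    rw [← weitz_dhat_comm, Derivation.commutator_apply]
    abel
  induction i with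
  | zero => simp [key, hd, he]
  | succ i ih =>
    rw [Function.iterate_succ_apply', key, ih, ee_iterate k n z w he, Derivation.map_smul,
      ← Function.iterate_succ_apply' (⇑(dhat k n))]
    push_cast
    module

/-- If `d(z) = 0` and `e(z) = w·z`, then
`d(d̂^i(z)) = i·(w − i + 1)·d̂^{i−1}(z)` for every `i ≥ 1`. -/
theorem weitz_iterate_dhat (k : Type*) [Field k] [CharZero k] (n : ℕ)
    (z : MvPolynomial (Fin (n + 1)) k) (w : k)
    (hd : weitz k n z = 0) (he : ee k n z = w • z) (i : ℕ) (hi : 1 ≤ i) :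
    weitz k n ((⇑(dhat k n))^[i] z) =
      ((i : k) * (w - (i : k) + 1)) • (⇑(dhat k n))^[i - 1] z := by
  obtain ⟨j, rfl⟩ : ∃ j, i = j + 1 := ⟨i - 1, by omega⟩
  rw [weitz_iterate_succ k n z w hd he j, Nat.add_sub_cancel]
  congr 1
  push_cast
  ring
end

section
/- For every nonzero homogeneous polynomial z ∈ k[X] of degree r ≥ 1 with d(z) = 0 that is an e-eigenvector, there exist polynomials c_0, c_1, …, c_n ∈ k[X], where each c_i is either zero or a nonzero e-eigenvector satisfying d(c_i) = 0 with e-eigenvalue w_i ≥ n−i, such that r·z = Σ_{i=0}^{n} τ_{n−i}(c_i); that is, every element of the kernel of d is a sum of Casimir elements τ_j applied to kernel elements of strictly smaller degree. -/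
open MvPolynomial Finset

/-- The Casimir element `τ_i(z) = Σ_{k=0}^{i} (−1)^k ((w−k)!/(k!·w!)) x_{i−k} d̂^k(z)`
associated to a kernel element `z` of weight `w`, for `i ≤ n`. -/
noncomputable def tau (k : Type*) [Field k] [CharZero k] (n w i : ℕ) (hi : i ≤ n)
    (z : MvPolynomial (Fin (n + 1)) k) : MvPolynomial (Fin (n + 1)) k :=
  ∑ j ∈ Finset.range (i + 1),
    ((-1 : k) ^ j * ((w - j).factorial : k) / ((j.factorial * w.factorial : ℕ) : k)) •
      (X (⟨i - j, by omega⟩ : Fin (n + 1)) * (⇑(dhat k n))^[j] z)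


section Helpers

variable {k : Type*} [Field k] [CharZero k] {n : ℕ}

lemma weitz_X_zero (i : Fin (n + 1)) (h : (i : ℕ) = 0) : weitz k n (X i) = 0 := by
  simp only [weitz, mkDerivation_X, h, dite_true]

lemma weitz_X_succ (i j : Fin (n + 1)) (h : (i : ℕ) = j + 1) : weitz k n (X i) = X j := by
  have h0 : (i : ℕ) ≠ 0 := by omega
  simp only [weitz, mkDerivation_X, h0, dite_false]
  congr 1
  ext
  simp [h]

lemma dhat_X_last (i : Fin (n + 1)) (h : (i : ℕ) = n) : dhat k n (X i) = 0 := by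
  simp [dhat, mkDerivation_X, h]

lemma dhat_X_succ (i j : Fin (n + 1)) (h : (j : ℕ) = i + 1) :
    dhat k n (X i) = ((((i : ℕ) + 1) * (n - (i : ℕ)) : ℕ) : k) • X j := by
  have h0 : (i : ℕ) ≠ n := by omega
  simp only [dhat, mkDerivation_X, h0, dite_false]
  congr 2
  ext
  simp [h]

lemma ee_X (i : Fin (n + 1)) : ee k n (X i) = ((n : k) - 2 * (i : ℕ)) • X i := by
  simp only [ee, mkDerivation_X]
  rw [← Int.cast_smul_eq_zsmul k]
  push_cast
  rfl

lemma comm_d_f (p : MvPolynomial (Fin (n + 1)) k) :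
    weitz k n (dhat k n p) = dhat k n (weitz k n p) + ee k n p := by
  have key : ⁅weitz k n, dhat k n⁆ = ee k n := by
    apply MvPolynomial.derivation_ext
    intro i
    rw [Derivation.commutator_apply, ee_X]
    have hi := i.isLt
    have A : weitz k n (dhat k n (X i)) = (((i : ℕ) + 1 : k) * (n - (i : ℕ))) • X i := by
      by_cases h : (i : ℕ) = n
      · rw [dhat_X_last i h, map_zero, h]; simp
      · rw [dhat_X_succ i ⟨i + 1, by omega⟩ rfl, Derivation.map_smul,
          weitz_X_succ ⟨i + 1, by omega⟩ i rfl]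
        push_cast [Nat.cast_sub (show (i : ℕ) ≤ n by omega)]
        rfl
    have B : dhat k n (weitz k n (X i)) = (((i : ℕ) : k) * (n - (i : ℕ) + 1)) • X i := by
      by_cases h : (i : ℕ) = 0
      · rw [weitz_X_zero i h, map_zero, h]; simp
      · rw [weitz_X_succ i ⟨i - 1, by omega⟩ (by simp; omega),
          dhat_X_succ ⟨i - 1, by omega⟩ i (by simp; omega)]
        congr 1
        simp only
        rw [Nat.sub_add_cancel (by omega), show n - ((i : ℕ) - 1) = n - i + 1 by omega]
        push_cast [Nat.cast_sub (show (i : ℕ) ≤ n by omega)]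
        rfl
    rw [A, B, ← sub_smul]
    congr 1
    ring
  rw [← key, Derivation.commutator_apply]
  abel

lemma comm_e_d (p : MvPolynomial (Fin (n + 1)) k) :
    ee k n (weitz k n p) = weitz k n (ee k n p) + (2 : k) • weitz k n p := by
  have key : ⁅ee k n, weitz k n⁆ = (2 : k) • weitz k n := by
    apply MvPolynomial.derivation_ext
    intro i
    have hi := i.isLt
    rw [Derivation.commutator_apply, ee_X, Derivation.map_smul, Derivation.smul_apply]
    by_cases h : (i : ℕ) = 0
    · rw [weitz_X_zero i h]; simp
    · rw [weitz_X_succ i ⟨i - 1, by omega⟩ (by simp; omega), ee_X, ← sub_smul]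
      congr 1
      simp only
      push_cast [Nat.cast_sub (show 1 ≤ (i : ℕ) by omega)]
      ring
  have := congrArg (fun D => D p) key
  simp only [Derivation.commutator_apply, Derivation.smul_apply] at this
  rw [← this]
  abel

lemma comm_e_f (p : MvPolynomial (Fin (n + 1)) k) :
    ee k n (dhat k n p) = dhat k n (ee k n p) - (2 : k) • dhat k n p := by
  have key : ⁅ee k n, dhat k n⁆ = (-2 : k) • dhat k n := by
    apply MvPolynomial.derivation_ext
    intro i
    have hi := i.isLt
    rw [Derivation.commutator_apply, ee_X, Derivation.map_smul, Derivation.smul_apply]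
    by_cases h : (i : ℕ) = n
    · rw [dhat_X_last i h]; simp
    · rw [dhat_X_succ i ⟨i + 1, by omega⟩ rfl, Derivation.map_smul, ee_X, smul_smul, smul_smul,
        smul_smul, ← sub_smul]
      congr 1
      push_cast
      ring
  have := congrArg (fun D => D p) key
  simp only [Derivation.commutator_apply, Derivation.smul_apply] at this
  rw [sub_eq_add_neg, ← neg_smul, ← this]
  abel

lemma comm_pd_d (i : Fin (n + 1)) (p : MvPolynomial (Fin (n + 1)) k) :
    weitz k n (pderiv i p) = pderiv i (weitz k n p) -
      (if h : (i : ℕ) + 1 ≤ n then pderiv (⟨i + 1, by omega⟩ : Fin (n + 1)) p else 0) := by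
  have key : ⁅weitz k n, pderiv (R := k) i⁆ =
      - (if h : (i : ℕ) + 1 ≤ n then pderiv (R := k) (⟨i + 1, by omega⟩ : Fin (n + 1)) else 0) := by
    apply MvPolynomial.derivation_ext
    intro j
    have hi := i.isLt
    have hj := j.isLt
    rw [Derivation.commutator_apply]
    have h1 : weitz k n (pderiv i (X j)) = 0 := by
      rw [pderiv_X]
      by_cases h : j = i
      · subst h; simp
      · simp [Pi.single_apply, h, Ne.symm h]
    rw [h1, zero_sub, Derivation.neg_apply]
    congr 1
    by_cases h : (j : ℕ) = 0
    · rw [weitz_X_zero j h, map_zero]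
      split_ifs with h2
      · rw [pderiv_X_of_ne]
        intro hh
        have := congrArg Fin.val hh
        simp at this; omega
      · rfl
    · rw [weitz_X_succ j ⟨j - 1, by omega⟩ (by simp; omega)]
      by_cases h3 : (j : ℕ) = i + 1
      · have h4 : (i : ℕ) + 1 ≤ n := by omega
        rw [dif_pos h4]
        have e1 : (⟨j - 1, by omega⟩ : Fin (n + 1)) = i := by ext; simp; omega
        have e2 : (⟨i + 1, by omega⟩ : Fin (n + 1)) = j := by ext; simp; omega
        rw [e1, e2, pderiv_X_self, pderiv_X_self]
      · rw [pderiv_X_of_ne]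
        · split_ifs with h2
          · rw [pderiv_X_of_ne]
            intro hh
            have := congrArg Fin.val hh
            simp at this; omega
          · rfl
        · intro hh
          have := congrArg Fin.val hh
          simp at this; omega
  have := congrArg (fun D => D p) key
  simp only [Derivation.commutator_apply, Derivation.neg_apply] at this
  rw [sub_eq_iff_eq_add] at this
  rw [this]
  split_ifs <;> simp [sub_eq_add_neg, add_comm]

lemma comm_pd_e (i : Fin (n + 1)) (p : MvPolynomial (Fin (n + 1)) k) :
    ee k n (pderiv i p) = pderiv i (ee k n p) - ((n : k) - 2 * (i : ℕ)) • pderiv i p := by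
  have key : ⁅ee k n, pderiv (R := k) i⁆ = -(((n : k) - 2 * (i : ℕ)) • pderiv (R := k) i) := by
    apply MvPolynomial.derivation_ext
    intro j
    rw [Derivation.commutator_apply, ee_X, Derivation.map_smul, Derivation.neg_apply,
      Derivation.smul_apply]
    by_cases h : j = i
    · subst h; simp
    · rw [pderiv_X_of_ne h]; simp
  have := congrArg (fun D => D p) key
  simp only [Derivation.commutator_apply, Derivation.neg_apply, Derivation.smul_apply] at this
  rw [sub_eq_iff_eq_add] at this
  rw [this]
  abel

/-! Local nilpotence of `dhat`. -/

lemma dhat_iter_zero (N : ℕ) : (⇑(dhat k n))^[N] 0 = 0 :=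
  Function.iterate_fixed (map_zero _) N

lemma dhat_iter_add (N : ℕ) (p q : MvPolynomial (Fin (n + 1)) k) :
    (⇑(dhat k n))^[N] (p + q) = (⇑(dhat k n))^[N] p + (⇑(dhat k n))^[N] q := by
  induction N generalizing p q with
  | zero => rfl
  | succ N ih => simp only [Function.iterate_succ_apply, map_add, ih]

lemma dhat_iter_mul (N : ℕ) : ∀ (a b : ℕ) (p q : MvPolynomial (Fin (n + 1)) k), a + b = N →
    (⇑(dhat k n))^[a] p = 0 → (⇑(dhat k n))^[b] q = 0 → (⇑(dhat k n))^[N] (p * q) = 0 := by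
  induction N with
  | zero =>
    intro a b p q hab hp hq
    have ha : a = 0 := by omega
    subst ha
    have hp' : p = 0 := hp
    rw [hp', zero_mul]; exact dhat_iter_zero _
  | succ N ih =>
    intro a b p q hab hp hq
    rcases a with _ | a
    · have hp' : p = 0 := hp
      rw [hp', zero_mul]; exact dhat_iter_zero _
    rcases b with _ | b
    · have hq' : q = 0 := hq
      rw [hq', mul_zero]; exact dhat_iter_zero _
    rw [Function.iterate_succ_apply, Derivation.leibniz, smul_eq_mul, smul_eq_mul, dhat_iter_add,
      ih (a + 1) b p _ (by omega) hp hq, ih (b + 1) a q _ (by omega) hq hp, add_zero]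

lemma dhat_iter_mono {a b : ℕ} (hab : a ≤ b) (p : MvPolynomial (Fin (n + 1)) k)
    (h : (⇑(dhat k n))^[a] p = 0) : (⇑(dhat k n))^[b] p = 0 := by
  obtain ⟨c, rfl⟩ := Nat.exists_eq_add_of_le hab
  rw [add_comm a c, Function.iterate_add_apply, h, dhat_iter_zero]

lemma dhat_nil_X (m : ℕ) : ∀ i : Fin (n + 1), (i : ℕ) + m = n →
    ∃ N, (⇑(dhat k n))^[N] (X i) = 0 := by
  induction m with
  | zero => intro i hi; exact ⟨1, dhat_X_last i (by omega)⟩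
  | succ m ih =>
    intro i hi
    obtain ⟨N, hN⟩ := ih ⟨i + 1, by omega⟩ (by simp; omega)
    refine ⟨N + 1, ?_⟩
    rw [Function.iterate_succ_apply, dhat_X_succ i ⟨i + 1, by omega⟩ rfl]
    have h3 : ∀ (M : ℕ) (a : k) (p : MvPolynomial (Fin (n + 1)) k),
        (⇑(dhat k n))^[M] (a • p) = a • (⇑(dhat k n))^[M] p := by
      intro M a
      induction M with
      | zero => intro p; rfl
      | succ M ih => intro p; simp only [Function.iterate_succ_apply, Derivation.map_smul, ih]
    rw [h3, hN, smul_zero]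

lemma dhat_nil (p : MvPolynomial (Fin (n + 1)) k) : ∃ N, (⇑(dhat k n))^[N] p = 0 := by
  induction p using MvPolynomial.induction_on with
  | C a => exact ⟨1, by simp⟩
  | add p q hp hq =>
    obtain ⟨a, ha⟩ := hp
    obtain ⟨b, hb⟩ := hq
    refine ⟨a + b, ?_⟩
    rw [dhat_iter_add, dhat_iter_mono (by omega) p ha, dhat_iter_mono (by omega) q hb, add_zero]
  | mul_X p i hp =>
    obtain ⟨a, ha⟩ := hp
    obtain ⟨b, hb⟩ := dhat_nil_X (k := k) (n - i) i (by omega)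
    exact ⟨a + b, dhat_iter_mul _ a b _ _ rfl ha hb⟩

/-! `sl₂` computations. -/

lemma ee_iter_d (j : ℕ) (v : MvPolynomial (Fin (n + 1)) k) (l : k) (hv : ee k n v = l • v) :
    ee k n ((⇑(weitz k n))^[j] v) = (l + 2 * j) • (⇑(weitz k n))^[j] v := by
  induction j with
  | zero => simp [hv]
  | succ j ih =>
    rw [Function.iterate_succ_apply', comm_e_d, ih, Derivation.map_smul, ← add_smul]
    congr 1
    push_cast; ring

lemma ee_iter_f (j : ℕ) (v : MvPolynomial (Fin (n + 1)) k) (l : k) (hv : ee k n v = l • v) :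
    ee k n ((⇑(dhat k n))^[j] v) = (l - 2 * j) • (⇑(dhat k n))^[j] v := by
  induction j with
  | zero => simp [hv]
  | succ j ih =>
    rw [Function.iterate_succ_apply', comm_e_f, ih, Derivation.map_smul, ← sub_smul]
    congr 1
    push_cast; ring

lemma iter_d_f (j : ℕ) (v : MvPolynomial (Fin (n + 1)) k) (l : k) (hv : ee k n v = l • v) :
    (⇑(weitz k n))^[j + 1] (dhat k n v) = dhat k n ((⇑(weitz k n))^[j + 1] v) +
      (((j : k) + 1) * (l + j)) • (⇑(weitz k n))^[j] v := by
  induction j with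
  | zero => simp [comm_d_f, hv]
  | succ j ih =>
    rw [Function.iterate_succ_apply', ih, map_add, comm_d_f, Derivation.map_smul,
      ee_iter_d _ _ _ hv, ← Function.iterate_succ_apply' (⇑(weitz k n)) (j + 1) v,
      ← Function.iterate_succ_apply' (⇑(weitz k n)) j v, add_assoc, ← add_smul]
    congr 2
    push_cast; ring

lemma d_iter_f (j : ℕ) (c : MvPolynomial (Fin (n + 1)) k) (l : k) (hc : ee k n c = l • c)
    (hd : weitz k n c = 0) :
    weitz k n ((⇑(dhat k n))^[j + 1] c) = (((j : k) + 1) * (l - j)) • (⇑(dhat k n))^[j] c := by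
  induction j with
  | zero => simp [comm_d_f, hc, hd]
  | succ j ih =>
    rw [Function.iterate_succ_apply', comm_d_f, ih, Derivation.map_smul,
      ee_iter_f _ _ _ hc, ← Function.iterate_succ_apply' (⇑(dhat k n)) j c, ← add_smul]
    congr 1
    push_cast; ring

lemma d_inj (N : ℕ) : ∀ (v : MvPolynomial (Fin (n + 1)) k) (p q : ℕ),
    (⇑(dhat k n))^[N] v = 0 → ee k n v = (-(p : k)) • v → (⇑(weitz k n))^[q] v = 0 → q ≤ p →
    v = 0 := by
  induction N with
  | zero => intro v p q h _ _ _; exact h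
  | succ N ih =>
    intro v p q hN he hq hqp
    have hdz : ∀ {w : MvPolynomial (Fin (n + 1)) k}, (⇑(weitz k n))^[q] w = 0 →
        (⇑(weitz k n))^[q + 1] w = 0 := by
      intro w hw; rw [Function.iterate_succ_apply', hw, map_zero]
    have hf : dhat k n v = 0 := by
      apply ih _ (p + 2) (q + 1) hN
      · have := ee_iter_f 1 v _ he
        simp only [Function.iterate_one] at this
        rw [this]
        congr 1
        push_cast; ring
      · rw [iter_d_f q v _ he, hdz hq, hq]; simp
      · omega
    have : ∀ q : ℕ, q ≤ p → (⇑(weitz k n))^[q] v = 0 → v = 0 := by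
      intro q
      induction q with
      | zero => intro _ h; exact h
      | succ q ihq =>
        intro hq h
        apply ihq (by omega)
        have h1 := iter_d_f q v _ he
        rw [h, hf, Function.iterate_fixed (map_zero (weitz k n)), map_zero, zero_add] at h1
        rcases smul_eq_zero.mp h1.symm with h2 | h2
        · exfalso
          rcases mul_eq_zero.mp h2 with h3 | h3
          · exact Nat.cast_add_one_ne_zero q h3
          · have : (q : k) = p := by linear_combination h3
            have := Nat.cast_injective this
            omega
        · exact h2
    exact this q hqp hq

lemma weight_bound (m : ℕ) (v : MvPolynomial (Fin (n + 1)) k) (L : ℤ)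
    (he : ee k n v = (L : k) • v) (h0 : (⇑(weitz k n))^[m] v ≠ 0)
    (h1 : (⇑(weitz k n))^[m + 1] v = 0) : 0 ≤ L + m := by
  by_contra hlt
  obtain ⟨N, hN⟩ := dhat_nil v
  apply h0
  have : v = 0 := by
    apply d_inj N v (-L).toNat (m + 1) hN _ h1 (by omega)
    rw [he]
    congr 1
    have : ((-L).toNat : ℤ) = -L := by omega
    have h2 : (((-L).toNat : ℤ) : k) = ((-L : ℤ) : k) := by rw [this]
    push_cast at h2
    rw [h2]; ring
  rw [this]
  exact Function.iterate_fixed (map_zero (weitz k n)) m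

/-- The variables extended by zero to all indices. -/
noncomputable def xx (k : Type*) [Field k] (n i : ℕ) : MvPolynomial (Fin (n + 1)) k :=
  if h : i ≤ n then X (⟨i, by omega⟩ : Fin (n + 1)) else 0

/-- Coefficients of the Casimir elements. -/
noncomputable def aa (k : Type*) [Field k] (w j : ℕ) : k :=
  (-1 : k) ^ j * ((w - j).factorial : k) / ((j.factorial * w.factorial : ℕ) : k)

/-- The Casimir elements, without index bounds. -/
noncomputable def tauN (k : Type*) [Field k] [CharZero k] (n w i : ℕ)
    (z : MvPolynomial (Fin (n + 1)) k) : MvPolynomial (Fin (n + 1)) k :=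
  ∑ j ∈ Finset.range (i + 1), aa k w j • (xx k n (i - j) * (⇑(dhat k n))^[j] z)

lemma tau_eq_tauN (w i : ℕ) (hi : i ≤ n) (z : MvPolynomial (Fin (n + 1)) k) :
    tau k n w i hi z = tauN k n w i z := by
  unfold tau tauN
  apply Finset.sum_congr rfl
  intro j _
  have : i - j ≤ n := by omega
  simp [aa, xx, this]

lemma aa_zero (w : ℕ) : aa k w 0 = 1 := by
  have : (w.factorial : k) ≠ 0 := Nat.cast_ne_zero.mpr w.factorial_ne_zero
  simp [aa, this]

lemma aa_succ (w j : ℕ) (h : j + 1 ≤ w) :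
    aa k w (j + 1) * (((j : k) + 1) * ((w : k) - j)) = - aa k w j := by
  obtain ⟨t, rfl⟩ := Nat.exists_eq_add_of_le h
  have h1 : ((j + 1 + t).factorial : k) ≠ 0 := Nat.cast_ne_zero.mpr (Nat.factorial_ne_zero _)
  have h2 : (j.factorial : k) ≠ 0 := Nat.cast_ne_zero.mpr (Nat.factorial_ne_zero _)
  have h3 : ((j : k) + 1) ≠ 0 := Nat.cast_add_one_ne_zero j
  have e1 : j + 1 + t - (j + 1) = t := by omega
  have e2 : j + 1 + t - j = t + 1 := by omega
  unfold aa
  rw [e1, e2, Nat.factorial_succ t, Nat.factorial_succ j]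
  generalize (j + 1 + t).factorial = F at h1
  push_cast
  field_simp
  ring

lemma main_ind (b : ℤ) (m : ℕ) : ∀ u : ℕ → MvPolynomial (Fin (n + 1)) k,
    (∀ i, weitz k n (u i) = - u (i + 1)) → (∀ i, m ≤ i → u i = 0) →
    (∀ i, ee k n (u i) = ((b + 2 * i : ℤ) : k) • u i) →
    ∃ (c : ℕ → MvPolynomial (Fin (n + 1)) k) (wt : ℕ → ℕ),
      (∀ i, weitz k n (c i) = 0 ∧ ee k n (c i) = (wt i : k) • c i ∧ i ≤ wt i) ∧
      ∑ i ∈ range m, xx k n i * u i = ∑ i ∈ range m, tauN k n (wt i) i (c i) := by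
  induction m with
  | zero =>
    intro u _ _ _
    exact ⟨fun _ => 0, fun i => i, fun i => by simp, by simp⟩
  | succ m ih =>
    intro u hd hz he
    have hdm : weitz k n (u m) = 0 := by rw [hd, hz (m + 1) le_rfl, neg_zero]
    by_cases hm : u m = 0
    · obtain ⟨c, wt, h1, h2⟩ := ih u hd (by
        intro i hi
        rcases Nat.eq_or_lt_of_le hi with h | h
        · rw [← h, hm]
        · exact hz i h) he
      refine ⟨Function.update c m 0, Function.update wt m m, ?_, ?_⟩
      · intro i
        by_cases h : i = m
        · subst h; simp
        · simpa [h] using h1 i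
      · rw [sum_range_succ, sum_range_succ, h2, hm]
        congr 1
        · apply sum_congr rfl
          intro i hi
          have : i ≠ m := by have := mem_range.mp hi; omega
          simp [this]
        · simp [tauN, dhat_iter_zero]
    · have hit : ∀ j, (⇑(weitz k n))^[j] (u 0) = (-1 : k) ^ j • u j := by
        intro j
        induction j with
        | zero => simp
        | succ j ihj =>
          rw [Function.iterate_succ_apply', ihj, Derivation.map_smul, hd, pow_succ]
          simp
      have hb := weight_bound m (u 0) b (by simpa using he 0)
        (by rw [hit]; simpa using hm) (by rw [hit, hz _ le_rfl, smul_zero])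
      obtain ⟨W, hW⟩ : ∃ W : ℕ, (W : ℤ) = b + 2 * m := ⟨(b + 2 * m).toNat, by omega⟩
      have hWm : m ≤ W := by omega
      have heW : ee k n (u m) = (W : k) • u m := by
        rw [he, ← hW]; simp
      let uu : ℕ → MvPolynomial (Fin (n + 1)) k := fun i =>
        if i ≤ m then u i - aa k W (m - i) • (⇑(dhat k n))^[m - i] (u m) else 0
      have hvm : uu m = 0 := by simp [uu, aa_zero]
      have hvz : ∀ i, m ≤ i → uu i = 0 := by
        intro i hi
        rcases Nat.eq_or_lt_of_le hi with h | h
        · rw [← h, hvm]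
        · simp only [uu]; rw [if_neg (by omega)]
      obtain ⟨c, wt, h1, h2⟩ := ih uu (by
        intro i
        by_cases hi : m ≤ i
        · rw [hvz i hi, hvz (i + 1) (by omega)]; simp
        · obtain ⟨t, ht⟩ : ∃ t, m - i = t + 1 := ⟨m - i - 1, by omega⟩
          have ht' : m - (i + 1) = t := by omega
          simp only [uu]
          rw [if_pos (by omega), if_pos (by omega), ht, ht', map_sub, hd, Derivation.map_smul,
            d_iter_f t _ _ heW hdm, smul_smul, aa_succ W t (by omega), neg_smul]
          abel) hvz (by
        intro i
        by_cases hi : i ≤ m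
        · simp only [uu]
          rw [if_pos hi, map_sub, he, Derivation.map_smul, ee_iter_f _ _ _ heW, smul_sub,
            smul_comm]
          congr 2
          have : (W : k) = ((b + 2 * m : ℤ) : k) := by rw [← hW]; simp
          rw [this]
          push_cast [Nat.cast_sub hi]
          ring
        · rw [hvz i (by omega)]; simp)
      refine ⟨Function.update c m (u m), Function.update wt m W, ?_, ?_⟩
      · intro i
        by_cases h : i = m
        · subst h; simp only [Function.update_self]; exact ⟨hdm, heW, hWm⟩
        · simpa [h] using h1 i
      · have hs : ∑ i ∈ range m, tauN k n (Function.update wt m W i) i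
            (Function.update c m (u m) i) = ∑ i ∈ range m, tauN k n (wt i) i (c i) := by
          apply sum_congr rfl
          intro i hi
          have : i ≠ m := by have := mem_range.mp hi; omega
          simp [this]
        rw [sum_range_succ (fun i => tauN k n _ i _), hs, ← h2]
        simp only [Function.update_self]
        have h3 : ∑ i ∈ range m, xx k n i * uu i = ∑ i ∈ range (m + 1), xx k n i * uu i := by
          rw [sum_range_succ, hvm]; simp
        rw [h3]
        unfold tauN
        rw [← sum_range_reflect (fun j => aa k W j • (xx k n (m - j) * (⇑(dhat k n))^[j] (u m))),
          ← sum_add_distrib]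
        apply sum_congr rfl
        intro i hi
        have him : i ≤ m := by have := mem_range.mp hi; omega
        have e1 : m + 1 - 1 - i = m - i := by omega
        have e2 : m - (m - i) = i := by omega
        simp only [uu]
        rw [if_pos him, e1, e2, mul_sub, mul_smul_comm]
        abel

end Helpers

/-- Every nonzero homogeneous isobaric kernel element `z` of
degree `r ≥ 1` decomposes as `r·z = Σ_{i=0}^{n} τ_{n−i}(c_i)` where each `c_i` is
zero or a kernel element that is an `e`-eigenvector of eigenvalue `w_i ≥ n−i`. -/
theorem kernel_element_decomposition (k : Type*) [Field k] [CharZero k] (n : ℕ)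
    (z : MvPolynomial (Fin (n + 1)) k) (hz0 : z ≠ 0) (r : ℕ) (hr : 1 ≤ r)
    (hhom : z.IsHomogeneous r) (w : ℕ)
    (hd : weitz k n z = 0) (he : ee k n z = (w : k) • z) :
    ∃ (c : Fin (n + 1) → MvPolynomial (Fin (n + 1)) k) (wt : Fin (n + 1) → ℕ),
      (∀ i : Fin (n + 1),
        weitz k n (c i) = 0 ∧ ee k n (c i) = (wt i : k) • c i ∧ n - (i : ℕ) ≤ wt i) ∧
      r • z = ∑ i : Fin (n + 1), tau k n (wt i) (n - (i : ℕ)) (by omega) (c i) := by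
  let u : ℕ → MvPolynomial (Fin (n + 1)) k := fun i =>
    if h : i ≤ n then pderiv (⟨i, by omega⟩ : Fin (n + 1)) z else 0
  obtain ⟨c, wt, h1, h2⟩ := main_ind (k := k) (n := n) ((w : ℤ) - n) (n + 1) u (by
      intro i
      by_cases hi : i ≤ n
      · simp only [u]
        rw [dif_pos hi, comm_pd_d, hd, map_zero, zero_sub]
      · simp only [u]
        rw [dif_neg hi, dif_neg (by omega)]; simp) (by
      intro i hi
      simp only [u]
      rw [dif_neg (by omega)]) (by
      intro i
      by_cases hi : i ≤ n
      · simp only [u]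
        rw [dif_pos hi, comm_pd_e, he, Derivation.map_smul, ← sub_smul]
        congr 1
        push_cast; ring
      · simp only [u]
        rw [dif_neg hi]; simp)
  refine ⟨fun i => c (n - i), fun i => wt (n - i), fun i => h1 (n - i), ?_⟩
  have h3 : r • z = ∑ i ∈ range (n + 1), xx k n i * u i := by
    rw [← hhom.sum_X_mul_pderiv, ← Fin.sum_univ_eq_sum_range (fun i => xx k n i * u i)]
    apply Finset.sum_congr rfl
    intro i _
    have hi : (i : ℕ) ≤ n := by omega
    simp only [xx, u]
    rw [dif_pos hi, dif_pos hi]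
  rw [h3, h2, ← sum_range_reflect,
    ← Fin.sum_univ_eq_sum_range (fun j => tauN k n (wt (n + 1 - 1 - j)) (n + 1 - 1 - j)
      (c (n + 1 - 1 - j)))]
  apply Finset.sum_congr rfl
  intro i _
  rw [tau_eq_tauN]
  rfl
end

section
/- For n = 2 (the polynomial ring k[x_0, x_1, x_2] with Weitzenböck derivation d(x_2) = x_1, d(x_1) = x_0, d(x_0) = 0), the kernel of d equals the k-subalgebra generated by the two polynomials t = x_0 and dv = x_1^2 − 2·x_0·x_2: k[x_0,x_1,x_2]^d = k[t, dv]. -/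
open MvPolynomial Finset

section Helpers
variable {k : Type*} [Field k] [CharZero k]

lemma weitz_X0 : weitz k 2 (X 0) = 0 := by simp [weitz, mkDerivation_X]
lemma weitz_X1 : weitz k 2 (X 1) = X 0 := by
  simp only [weitz, mkDerivation_X]; rfl
lemma weitz_X2 : weitz k 2 (X 2) = X 1 := by
  simp only [weitz, mkDerivation_X]; rfl

noncomputable def DD (k : Type*) [Field k] : MvPolynomial (Fin (2 + 1)) k :=
  X 1 ^ 2 - 2 * X 0 * X 2

lemma weitz_DD : weitz k 2 (DD k) = 0 := by
  have h2 : (2 : MvPolynomial (Fin (2+1)) k) = C 2 := (map_ofNat C 2).symm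
  have : weitz k 2 (2 : MvPolynomial (Fin (2+1)) k) = 0 := by
    rw [h2]; exact (weitz k 2).map_algebraMap 2
  simp only [DD, map_sub, Derivation.leibniz, Derivation.leibniz_pow, weitz_X0, weitz_X1,
    weitz_X2, this, smul_eq_mul, nsmul_eq_mul]
  push_cast
  ring

noncomputable def psi (k : Type*) [Field k] :
    MvPolynomial (Fin (2 + 1)) k →ₐ[k] MvPolynomial (Fin (2 + 1)) k :=
  aeval ![X 0, X 1, DD k]

lemma psi_X0 : psi k (X 0) = X 0 := by simp [psi]
lemma psi_X1 : psi k (X 1) = X 1 := by simp [psi]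
lemma psi_X2 : psi k (X 2) = DD k := by simp [psi]

lemma claim1 (f : MvPolynomial (Fin (2 + 1)) k) : ∃ N g, X 0 ^ N * f = psi k g := by
  induction f using MvPolynomial.induction_on with
  | C a => exact ⟨0, C a, by simp [psi, algebraMap_eq]⟩
  | add p q hp hq =>
    obtain ⟨N, g, h⟩ := hp
    obtain ⟨M, g', h'⟩ := hq
    refine ⟨N + M, X 0 ^ M * g + X 0 ^ N * g', ?_⟩
    simp only [map_add, map_mul, map_pow, psi_X0, ← h, ← h']
    ring
  | mul_X p i hp =>
    obtain ⟨N, g, h⟩ := hp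
    have key : X 0 * X i = psi k
        (![X 0 * X 0, X 0 * X 1, C (1/2) * (X 1 ^ 2 - X 2)] i) := by
      fin_cases i
      · simp [psi_X0]
      · simp [psi_X0, psi_X1]
      · have h2 : (C (1/2) * 2 : MvPolynomial (Fin (2+1)) k) = 1 := by
          have : (2 : MvPolynomial (Fin (2+1)) k) = C 2 := (map_ofNat C 2).symm
          rw [this, ← C_mul]; simp
        have hc : psi k (C (1/2)) = C (1/2) := by simp [psi, algebraMap_eq]
        change X 0 * X 2 = psi k (C (1/2) * (X 1 ^ 2 - X 2))
        rw [map_mul, map_sub, map_pow, psi_X1, psi_X2, hc, DD]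
        linear_combination (- X 0 * X 2) * h2
    exact ⟨N + 1, g * (![X 0 * X 0, X 0 * X 1, C (1/2) * (X 1 ^ 2 - X 2)] i), by rw [map_mul, ← h, ← key]; ring⟩

lemma psi_inj (g : MvPolynomial (Fin (2 + 1)) k) (h : psi k g = 0) : g = 0 := by
  have : X 0 * g = 0 := by
    apply MvPolynomial.funext
    intro a
    by_cases h0 : a 0 = 0
    · simp [h0]
    · have := congrArg (aeval ![a 0, a 1, (a 1 ^ 2 - a 2) / (2 * a 0)]) h
      rw [psi, ← AlgHom.comp_apply, comp_aeval] at this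
      have e : (fun i => (aeval ![a 0, a 1, (a 1 ^ 2 - a 2) / (2 * a 0)] :
          MvPolynomial (Fin (2+1)) k →ₐ[k] k) ((![X 0, X 1, DD k] : Fin (2+1) → _) i)) = a := by
        ext i
        fin_cases i
        · simp
        · simp
        · simp [DD]
          field_simp
          ring
      rw [e, map_zero] at this
      rw [map_mul, map_zero]
      change eval a g = 0 at this
      simp [this]
  exact (mul_eq_zero.mp this).resolve_left (X_ne_zero _)

lemma weitz_psi (g : MvPolynomial (Fin (2 + 1)) k) :
    weitz k 2 (psi k g) = X 0 * psi k (pderiv 1 g) := by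
  induction g using MvPolynomial.induction_on with
  | C a =>
    have hc : psi k (C a) = C a := by simp [psi, algebraMap_eq]
    rw [hc, pderiv_C, map_zero, mul_zero]
    exact (weitz k 2).map_algebraMap a
  | add p q hp hq => simp only [map_add, hp, hq]; ring
  | mul_X p i hp =>
    have key : weitz k 2 (psi k (X i)) = X 0 * psi k (pderiv 1 (X i)) := by
      fin_cases i
      · change weitz k 2 (psi k (X 0)) = X 0 * psi k (pderiv 1 (X 0))
        rw [psi_X0, weitz_X0, pderiv_X_of_ne (by decide)]; simp
      · change weitz k 2 (psi k (X 1)) = X 0 * psi k (pderiv 1 (X 1))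
        rw [psi_X1, weitz_X1, pderiv_X_self]; simp
      · change weitz k 2 (psi k (X 2)) = X 0 * psi k (pderiv 1 (X 2))
        rw [psi_X2, weitz_DD, pderiv_X_of_ne (by decide)]; simp
    rw [map_mul, Derivation.leibniz, Derivation.leibniz, hp, key]
    simp only [smul_eq_mul, map_add, map_mul]
    ring

lemma pderiv_zero (g : MvPolynomial (Fin (2 + 1)) k) (h : pderiv 1 g = 0) :
    g = aeval ![X 0, 0, X 2] g := by
  apply MvPolynomial.funext
  intro a
  let φ : MvPolynomial (Fin (2 + 1)) k →ₐ[k] Polynomial k :=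
    aeval ![Polynomial.C (a 0), Polynomial.X, Polynomial.C (a 2)]
  have hd : ∀ p, Polynomial.derivative (φ p) = φ (pderiv 1 p) := by
    intro p
    induction p using MvPolynomial.induction_on with
    | C a => simp [φ]
    | add p q hp hq => simp only [map_add, hp, hq]
    | mul_X p i hp =>
      have key : Polynomial.derivative (φ (X i)) = φ (pderiv 1 (X i)) := by
        fin_cases i
        · change Polynomial.derivative (φ (X 0)) = φ (pderiv 1 (X 0))
          rw [pderiv_X_of_ne (by decide)]; simp [φ]
        · change Polynomial.derivative (φ (X 1)) = φ (pderiv 1 (X 1))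
          rw [pderiv_X_self]; simp [φ]
        · change Polynomial.derivative (φ (X 2)) = φ (pderiv 1 (X 2))
          rw [pderiv_X_of_ne (by decide)]; simp [φ]
      rw [map_mul, Polynomial.derivative_mul, Derivation.leibniz, hp, key]
      simp only [smul_eq_mul, map_add, map_mul]
      ring
  have h0 : Polynomial.derivative (φ g) = 0 := by rw [hd, h, map_zero]
  have hC := Polynomial.eq_C_of_derivative_eq_zero h0
  have hev : ∀ t, Polynomial.aeval t (φ g) = eval ![a 0, t, a 2] g := by
    intro t
    rw [← AlgHom.comp_apply, comp_aeval, ← coe_aeval_eq_eval]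
    have : (fun i => Polynomial.aeval t
        ((![Polynomial.C (a 0), Polynomial.X, Polynomial.C (a 2)] : Fin (2+1) → _) i))
        = ![a 0, t, a 2] := by
      ext i; fin_cases i <;> simp
    rw [this]; rfl
  have h1 : eval ![a 0, a 1, a 2] g = eval ![a 0, 0, a 2] g := by
    rw [← hev, ← hev, hC]; simp
  have ha : ![a 0, a 1, a 2] = a := by ext i; fin_cases i <;> simp
  rw [ha] at h1
  rw [h1, ← coe_aeval_eq_eval, ← coe_aeval_eq_eval]
  change _ = (aeval a) (aeval _ g)
  rw [← AlgHom.comp_apply, comp_aeval]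
  have : (fun i => aeval a ((![X 0, 0, X 2] : Fin (2+1) → MvPolynomial (Fin (2+1)) k) i))
        = ![a 0, 0, a 2] := by
      ext i; fin_cases i <;> simp
  rw [this]; rfl

lemma div_X0 (f : MvPolynomial (Fin (2 + 1)) k)
    (h : X 0 * f ∈ Algebra.adjoin k ({X 0, DD k} : Set (MvPolynomial (Fin (2 + 1)) k))) :
    f ∈ Algebra.adjoin k ({X 0, DD k} : Set (MvPolynomial (Fin (2 + 1)) k)) := by
  set S := Algebra.adjoin k ({X 0, DD k} : Set (MvPolynomial (Fin (2 + 1)) k)) with hS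
  have hD : DD k ∈ S := Algebra.subset_adjoin (by simp)
  have hX : X 0 ∈ S := Algebra.subset_adjoin (by simp)
  have hP : ∀ u : Polynomial k, Polynomial.aeval (DD k) u ∈ S := fun u =>
    Polynomial.aeval_mem_adjoin_singleton k (DD k) |> Algebra.adjoin_mono (by simp)
  have key : ∀ p ∈ S, ∃ q ∈ S, ∃ u : Polynomial k, p = X 0 * q + Polynomial.aeval (DD k) u := by
    intro p hp
    induction hp using Algebra.adjoin_induction with
    | mem x hx =>
      rcases hx with rfl | hx
      · exact ⟨1, S.one_mem, 0, by simp⟩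
      · rw [Set.mem_singleton_iff] at hx
        exact ⟨0, S.zero_mem, Polynomial.X, by simp [hx]⟩
    | algebraMap r => exact ⟨0, S.zero_mem, Polynomial.C r, by simp⟩
    | add x y _ _ hx hy =>
      obtain ⟨q, hq, u, e⟩ := hx
      obtain ⟨q', hq', u', e'⟩ := hy
      exact ⟨q + q', S.add_mem hq hq', u + u', by rw [e, e', map_add]; ring⟩
    | mul x y _ _ hx hy =>
      obtain ⟨q, hq, u, e⟩ := hx
      obtain ⟨q', hq', u', e'⟩ := hy
      exact ⟨X 0 * q * q' + q * Polynomial.aeval (DD k) u' + Polynomial.aeval (DD k) u * q',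
        S.add_mem (S.add_mem (S.mul_mem (S.mul_mem hX hq) hq') (S.mul_mem hq (hP _)))
          (S.mul_mem (hP _) hq'), u * u', by rw [e, e', map_mul]; ring⟩
  obtain ⟨q, hq, u, e⟩ := key _ h
  have e2 := congrArg (aeval ![0, Polynomial.X, 0] :
    MvPolynomial (Fin (2 + 1)) k →ₐ[k] Polynomial k) e
  rw [map_add, map_mul, map_mul, ← Polynomial.aeval_algHom_apply] at e2
  simp [DD] at e2
  have hu : u = 0 := by
    rw [← Polynomial.expand_eq_zero (R := k) (p := 2) (by norm_num), Polynomial.expand_eq_comp_X_pow]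
    rw [Polynomial.comp, ← Polynomial.algebraMap_eq, ← Polynomial.aeval_def]
    exact e2.symm
  rw [hu, map_zero, add_zero] at e
  rw [mul_left_cancel₀ (X_ne_zero _) e]
  exact hq

end Helpers

/-- For `n = 2`, the kernel of the Weitzenböck derivation on
`k[x_0, x_1, x_2]` is generated by `t = x_0` and `dv = x_1² − 2·x_0·x_2`. -/
theorem kernel_n2 (k : Type*) [Field k] [CharZero k] :
    ∀ f : MvPolynomial (Fin (2 + 1)) k,
      weitz k 2 f = 0 ↔ f ∈ Algebra.adjoin k
        ({X 0, X 1 ^ 2 - 2 * X 0 * X 2} : Set (MvPolynomial (Fin (2 + 1)) k)) := by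
  intro f
  change _ ↔ f ∈ Algebra.adjoin k ({X 0, DD k} : Set (MvPolynomial (Fin (2 + 1)) k))
  constructor
  · intro hf
    obtain ⟨N, g, h⟩ := claim1 f
    have h1 : weitz k 2 (psi k g) = 0 := by
      rw [← h, Derivation.leibniz, Derivation.leibniz_pow, hf, weitz_X0]; simp
    rw [weitz_psi] at h1
    have h2 := psi_inj _ ((mul_eq_zero.mp h1).resolve_left (X_ne_zero _))
    have h3 := pderiv_zero g h2
    have h4 : X 0 ^ N * f ∈
        Algebra.adjoin k ({X 0, DD k} : Set (MvPolynomial (Fin (2 + 1)) k)) := by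
      rw [h, h3, ← AlgHom.comp_apply, comp_aeval, aeval_def]
      apply eval₂_mem
      · intro i _; exact Subalgebra.algebraMap_mem _ _
      · intro i
        fin_cases i
        · simpa [psi_X0] using Algebra.subset_adjoin (by simp)
        · simp
        · simpa [psi_X2] using Algebra.subset_adjoin (by simp)
    clear h
    induction N with
    | zero => simpa using h4
    | succ n ih =>
      apply ih
      apply div_X0
      rw [← mul_assoc, ← pow_succ']
      exact h4
  · intro hf
    induction hf using Algebra.adjoin_induction with
    | mem x hx =>
      rcases hx with rfl | hx
      · exact weitz_X0
      · rw [Set.mem_singleton_iff] at hx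
        rw [hx]; exact weitz_DD
    | algebraMap r => exact (weitz k 2).map_algebraMap r
    | add x y _ _ hx hy => rw [map_add, hx, hy, add_zero]
    | mul x y _ _ hx hy => rw [Derivation.leibniz, hx, hy]; simp
end

section
/- For n = 3 (the polynomial ring k[x_0, x_1, x_2, x_3] with Weitzenböck derivation d(x_i) = x_{i−1}, d(x_0) = 0), the kernel of d equals the k-subalgebra generated by the four polynomials t = x_0, dv = x_1^2 − 2·t·x_2, tr = x_1^3 − 3·t·x_1·x_2 + 3·t^2·x_3, and c = −18·t·x_1·x_2·x_3 + 8·t·x_2^3 + 9·t^2·x_3^2 + 6·x_1^3·x_3 − 3·x_1^2·x_2^2: k[x_0,x_1,x_2,x_3]^d = k[t, dv, tr, c]. -/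
open MvPolynomial Finset

namespace KerAux

set_option linter.unusedSectionVars false

variable (k : Type*) [Field k] [CharZero k]

/-- The ambient polynomial ring. -/
abbrev B := MvPolynomial (Fin (3 + 1)) k

/-- The quadratic generator. -/
noncomputable def dv : B k := X 1 ^ 2 - 2 * X 0 * X 2

/-- The cubic generator. -/
noncomputable def tr : B k := X 1 ^ 3 - 3 * X 0 * X 1 * X 2 + 3 * X 0 ^ 2 * X 3

/-- The quartic generator. -/
noncomputable def c : B k := -18 * X 0 * X 1 * X 2 * X 3 + 8 * X 0 * X 2 ^ 3
  + 9 * X 0 ^ 2 * X 3 ^ 2 + 6 * X 1 ^ 3 * X 3 - 3 * X 1 ^ 2 * X 2 ^ 2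

/-- The subalgebra generated. -/
noncomputable def A : Subalgebra k (B k) := Algebra.adjoin k {X 0, dv k, tr k, c k}

lemma t_mem : (X 0 : B k) ∈ A k := Algebra.subset_adjoin (by simp)
lemma dv_mem : dv k ∈ A k := Algebra.subset_adjoin (by simp)
lemma tr_mem : tr k ∈ A k := Algebra.subset_adjoin (by simp)
lemma c_mem : c k ∈ A k := Algebra.subset_adjoin (by simp)

lemma d0 : weitz k 3 (X 0) = 0 := by
  simp [weitz, mkDerivation_X]
lemma d1 : weitz k 3 (X 1) = X 0 := by
  simp [weitz, mkDerivation_X]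
lemma d2 : weitz k 3 (X 2) = X 1 := by
  simp [weitz, mkDerivation_X]
lemma d3 : weitz k 3 (X 3) = X 2 := by
  simp [weitz, mkDerivation_X]

lemma dnum (n : ℕ) [n.AtLeastTwo] : weitz k 3 (ofNat(n) : B k) = 0 := by
  have := (weitz k 3).map_natCast (OfNat.ofNat n)
  rwa [Nat.cast_ofNat] at this

lemma d_of_mem {a : B k} (ha : a ∈ A k) : weitz k 3 a = 0 := by
  unfold A at ha
  induction ha using Algebra.adjoin_induction with
  | mem x hx =>
    simp only [Set.mem_insert_iff, Set.mem_singleton_iff] at hx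
    rcases hx with rfl | rfl | rfl | rfl
    · exact d0 k
    · simp only [dv, map_sub, Derivation.leibniz, Derivation.leibniz_pow, d0, d1, d2, dnum,
        smul_eq_mul, nsmul_eq_mul]
      push_cast; ring
    · simp only [tr, map_add, map_sub, Derivation.leibniz, Derivation.leibniz_pow, d0, d1, d2, d3,
        dnum, smul_eq_mul, nsmul_eq_mul]
      push_cast; ring
    · simp only [c, map_add, map_sub, map_neg, Derivation.leibniz, Derivation.leibniz_pow, d0, d1,
        d2, d3, dnum, smul_eq_mul, nsmul_eq_mul]
      push_cast; ring
  | algebraMap r => exact (weitz k 3).map_algebraMap r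
  | add x y _ _ hx hy => simp [hx, hy]
  | mul x y _ _ hx hy => simp [hx, hy]

lemma d_aeval (p : Polynomial (A k)) :
    weitz k 3 (Polynomial.aeval (X 1 : B k) p)
      = Polynomial.aeval (X 1 : B k) (Polynomial.derivative p) * X 0 := by
  induction p using Polynomial.induction_on' with
  | add p q hp hq => simp [hp, hq, add_mul]
  | monomial n a =>
    have ha : weitz k 3 (algebraMap (A k) (B k) a) = 0 := d_of_mem k a.2
    rw [Polynomial.derivative_monomial, Polynomial.aeval_monomial, Polynomial.aeval_monomial]
    simp only [Derivation.leibniz, Derivation.leibniz_pow, ha, d1, smul_eq_mul, nsmul_eq_mul,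
      map_mul, map_natCast]
    ring

lemma t_ne : (X 0 : B k) ≠ 0 := X_ne_zero 0

lemma aeval_inj (n : ℕ) : ∀ p : Polynomial (A k), p.natDegree ≤ n →
    Polynomial.aeval (X 1 : B k) p = 0 → p = 0 := by
  induction n with
  | zero =>
    intro p hp h
    rw [Polynomial.eq_C_of_natDegree_le_zero hp] at h ⊢
    rw [Polynomial.aeval_C] at h
    have : p.coeff 0 = 0 := Subtype.ext h
    simp [this]
  | succ n ih =>
    intro p hp h
    have h1 := d_aeval k p
    rw [h, map_zero] at h1
    have h2 := (mul_eq_zero.1 h1.symm).resolve_right (t_ne k)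
    have h3 := ih _ ((Polynomial.natDegree_derivative_le p).trans (by omega)) h2
    have h4 := Polynomial.derivative_eq_zero.1 h3
    rw [Polynomial.eq_C_of_natDegree_eq_zero h4] at h ⊢
    rw [Polynomial.aeval_C] at h
    have : p.coeff 0 = 0 := Subtype.ext h
    simp [this]

lemma exists_pow (f : B k) : ∃ (N : ℕ) (p : Polynomial (A k)),
    X 0 ^ N * f = Polynomial.aeval (X 1 : B k) p := by
  have two : (C (1/2 : k) : B k) * 2 = 1 := by
    have : (2 : B k) = C (2 : k) := (map_ofNat C 2).symm
    rw [this, ← C_mul]; norm_num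
  have three : (C (1/3 : k) : B k) * 3 = 1 := by
    have : (3 : B k) = C (3 : k) := (map_ofNat C 3).symm
    rw [this, ← C_mul]; norm_num
  have key : ∀ i : Fin (3+1), ∃ (N : ℕ) (p : Polynomial (A k)),
      X 0 ^ N * (X i : B k) = Polynomial.aeval (X 1 : B k) p := by
    have e2 : ∃ p : Polynomial (A k), X 0 * X 2 = Polynomial.aeval (X 1 : B k) p := by
      refine ⟨Polynomial.C (algebraMap k (A k) (1/2)) *
        (Polynomial.X ^ 2 + Polynomial.C ⟨-dv k, neg_mem (dv_mem k)⟩), ?_⟩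
      simp only [map_mul, map_add, map_pow, Polynomial.aeval_C, Polynomial.aeval_X]
      change _ = C (1/2) * (X 1 ^ 2 + -dv k)
      unfold dv
      linear_combination (-X 0 * X 2) * two
    obtain ⟨p2, h2⟩ := e2
    intro i
    fin_cases i
    · refine ⟨0, Polynomial.C ⟨X 0, t_mem k⟩, ?_⟩
      rw [Polynomial.aeval_C, pow_zero, one_mul]; rfl
    · exact ⟨0, Polynomial.X, by simp⟩
    · exact ⟨1, p2, by simpa using h2⟩
    · refine ⟨2, Polynomial.C (algebraMap k (A k) (1/3)) *
        (Polynomial.C ⟨tr k, tr_mem k⟩ + Polynomial.C ⟨-1, neg_mem (one_mem _)⟩ * Polynomial.X ^ 3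
        + 3 * Polynomial.X * p2), ?_⟩
      simp only [map_mul, map_add, map_pow, map_ofNat, Polynomial.aeval_C,
        Polynomial.aeval_X, ← h2]
      change X 0 ^ 2 * X 3 = C (1/3) * (tr k + -1 * X 1 ^ 3 + 3 * X 1 * (X 0 * X 2))
      unfold tr
      linear_combination (-X 0 ^ 2 * X 3) * three
  induction f using MvPolynomial.induction_on with
  | C r =>
    refine ⟨0, Polynomial.C (algebraMap k (A k) r), ?_⟩
    rw [Polynomial.aeval_C, pow_zero, one_mul]; rfl
  | add f g hf hg =>
    obtain ⟨N, p, hp⟩ := hf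
    obtain ⟨M, q, hq⟩ := hg
    refine ⟨N + M, Polynomial.C ⟨X 0, t_mem k⟩ ^ M * p + Polynomial.C ⟨X 0, t_mem k⟩ ^ N * q, ?_⟩
    rw [map_add, map_mul, map_mul, map_pow, map_pow, Polynomial.aeval_C, ← hp, ← hq]
    change _ = X 0 ^ M * _ + X 0 ^ N * _
    ring
  | mul_X f i hf =>
    obtain ⟨N, p, hp⟩ := hf
    obtain ⟨M, q, hq⟩ := key i
    refine ⟨N + M, p * q, ?_⟩
    rw [map_mul, ← hp, ← hq]; ring

lemma tpow_mem {f : B k} (hf : weitz k 3 f = 0) : ∃ N : ℕ, X 0 ^ N * f ∈ A k := by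
  obtain ⟨N, p, hp⟩ := exists_pow k f
  refine ⟨N, ?_⟩
  have h0 : weitz k 3 (X 0 ^ N * f) = 0 := by
    simp [Derivation.leibniz, Derivation.leibniz_pow, hf, d0]
  rw [hp, d_aeval] at h0
  have h1 := (mul_eq_zero.1 h0).resolve_right (t_ne k)
  have h2 := aeval_inj k _ _ le_rfl h1
  have h3 := Polynomial.derivative_eq_zero.1 h2
  rw [hp, Polynomial.eq_C_of_natDegree_eq_zero h3, Polynomial.aeval_C]
  exact (p.coeff 0).2

/-- Evaluation of two-variable polynomials at `dv`, `c`. -/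
noncomputable def E : Polynomial (Polynomial k) →+* B k :=
  Polynomial.eval₂RingHom (Polynomial.aeval (dv k)).toRingHom (c k)

lemma E_X : E k Polynomial.X = c k := by simp [E]
lemma E_C (r : Polynomial k) : E k (Polynomial.C r) = Polynomial.aeval (dv k) r := by simp [E]

lemma E_mem (p : Polynomial (Polynomial k)) : E k p ∈ A k := by
  induction p using Polynomial.induction_on' with
  | add p q hp hq => rw [map_add]; exact add_mem hp hq
  | monomial n a =>
    rw [← Polynomial.C_mul_X_pow_eq_monomial, map_mul, map_pow, E_X, E_C]
    refine mul_mem ?_ (_root_.pow_mem (c_mem k) n)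
    have := (Polynomial.aeval (⟨dv k, dv_mem k⟩ : A k) a).2
    rwa [Polynomial.aeval_subalgebra_coe] at this

lemma rel : tr k ^ 2 = dv k ^ 3 + X 0 ^ 2 * c k := by
  unfold tr dv c; ring

lemma normal {a : B k} (ha : a ∈ A k) : ∃ a' ∈ A k, ∃ p q, a = X 0 * a' + E k p + tr k * E k q := by
  unfold A at ha
  induction ha using Algebra.adjoin_induction with
  | mem x hx =>
    simp only [Set.mem_insert_iff, Set.mem_singleton_iff] at hx
    rcases hx with rfl | rfl | rfl | rfl
    · exact ⟨1, one_mem _, 0, 0, by simp⟩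
    · exact ⟨0, zero_mem _, Polynomial.C Polynomial.X, 0, by simp [E_C]⟩
    · exact ⟨0, zero_mem _, 0, 1, by simp⟩
    · exact ⟨0, zero_mem _, Polynomial.X, 0, by simp [E_X]⟩
  | algebraMap r =>
    exact ⟨0, zero_mem _, Polynomial.C (Polynomial.C r), 0, by simp [E_C]⟩
  | add x y _ _ hx hy =>
    obtain ⟨a, ha, p, q, rfl⟩ := hx
    obtain ⟨b, hb, r, s, rfl⟩ := hy
    exact ⟨a + b, add_mem ha hb, p + r, q + s, by simp only [map_add]; ring⟩
  | mul x y _ hyA hx hy =>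
    obtain ⟨a, ha, p, q, rfl⟩ := hx
    obtain ⟨b, hb, r, s, hy⟩ := hy
    refine ⟨a * y + (E k p + tr k * E k q) * b + X 0 * c k * E k q * E k s, ?_,
      p * r + Polynomial.C (Polynomial.X ^ 3) * q * s, p * s + q * r, ?_⟩
    · have hE := E_mem k
      exact add_mem (add_mem (mul_mem ha hyA) (mul_mem (add_mem (hE p) (mul_mem (tr_mem k) (hE q))) hb))
        (mul_mem (mul_mem (mul_mem (t_mem k) (c_mem k)) (hE q)) (hE s))
    · simp only [map_add, map_mul, E_C, map_pow, Polynomial.aeval_X]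
      linear_combination (E k p + tr k * E k q) * hy + E k q * E k s * rel k

/-- Specialisation. -/
noncomputable def psi : B k →ₐ[k] Polynomial (Polynomial k) :=
  MvPolynomial.aeval ![0, Polynomial.C Polynomial.X, 0, Polynomial.X]

lemma psi_t : psi k (X 0) = 0 := by simp [psi]
lemma psi_dv : psi k (dv k) = Polynomial.C (Polynomial.X ^ 2) := by simp [psi, dv]
lemma psi_tr : psi k (tr k) = Polynomial.C (Polynomial.X ^ 3) := by simp [psi, tr]
lemma psi_c : psi k (c k) = Polynomial.C (6 * Polynomial.X ^ 3) * Polynomial.X := by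
  have h6 : (Polynomial.C 6 : Polynomial (Polynomial k)) = 6 := map_ofNat Polynomial.C 6
  simp [psi, c, h6]

lemma psi_E (p : Polynomial (Polynomial k)) : psi k (E k p) =
    (p.map (Polynomial.expand k 2).toRingHom).comp
      (Polynomial.C (6 * Polynomial.X ^ 3) * Polynomial.X) := by
  induction p using Polynomial.induction_on' with
  | add p q hp hq => simp only [map_add, hp, hq, Polynomial.map_add, Polynomial.add_comp]
  | monomial n a =>
    rw [← Polynomial.C_mul_X_pow_eq_monomial, map_mul, map_mul, map_pow, map_pow, E_X, E_C, psi_c,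
      Polynomial.map_mul, Polynomial.mul_comp, Polynomial.map_pow, Polynomial.map_X,
      Polynomial.X_pow_comp, Polynomial.map_C, Polynomial.C_comp, ← Polynomial.aeval_algHom_apply,
      psi_dv]
    congr 1
    change _ = Polynomial.C (Polynomial.expand k 2 a)
    have := Polynomial.aeval_algHom_apply (Algebra.ofId (Polynomial k) (Polynomial (Polynomial k))
      |>.restrictScalars k) (Polynomial.X ^ 2 : Polynomial k) a
    have e : Polynomial.expand k 2 a = Polynomial.aeval (Polynomial.X ^ 2 : Polynomial k) a := rfl
    rw [e]
    exact this

lemma psi_E_coeff (p : Polynomial (Polynomial k)) (n : ℕ) : (psi k (E k p)).coeff n =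
    Polynomial.expand k 2 (p.coeff n) * (6 * Polynomial.X ^ 3) ^ n := by
  rw [psi_E, Polynomial.comp_C_mul_X_coeff, Polynomial.coeff_map]
  rfl

lemma parity (p q : Polynomial k)
    (h : Polynomial.expand k 2 p + Polynomial.X ^ 3 * Polynomial.expand k 2 q = 0) :
    p = 0 ∧ q = 0 := by
  have hq : q = 0 := by
    ext n
    have := congrArg (fun r => Polynomial.coeff r (2 * n + 3)) h
    simp only [Polynomial.coeff_add, Polynomial.coeff_X_pow_mul, Polynomial.coeff_zero] at this
    rw [Polynomial.coeff_expand_mul' (by norm_num), Polynomial.coeff_expand (by norm_num),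
      if_neg (by omega)] at this
    simpa using this
  subst hq
  simpa [Polynomial.expand_eq_zero] using h

lemma indep (p q : Polynomial (Polynomial k)) (h : psi k (E k p + tr k * E k q) = 0) :
    p = 0 ∧ q = 0 := by
  have key : ∀ n, p.coeff n = 0 ∧ q.coeff n = 0 := by
    intro n
    have := congrArg (fun r => Polynomial.coeff r n) h
    rw [map_add, map_mul, psi_tr] at this
    simp only [Polynomial.coeff_add, Polynomial.coeff_C_mul, Polynomial.coeff_zero,
      psi_E_coeff] at this
    apply parity
    have h6 : (6 * Polynomial.X ^ 3 : Polynomial k) ^ n ≠ 0 :=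
      pow_ne_zero _ (mul_ne_zero (by norm_num) (pow_ne_zero _ Polynomial.X_ne_zero))
    refine (mul_eq_zero.1 (?_ : _ * (6 * Polynomial.X ^ 3 : Polynomial k) ^ n = 0)).resolve_right h6
    rw [← this]
    ring
  exact ⟨Polynomial.ext fun n => by simp [(key n).1], Polynomial.ext fun n => by simp [(key n).2]⟩

lemma of_t_mul {g : B k} (h : X 0 * g ∈ A k) : g ∈ A k := by
  obtain ⟨a, ha, p, q, e⟩ := normal k h
  have e' : E k p + tr k * E k q = X 0 * (g - a) := by linear_combination -e
  obtain ⟨rfl, rfl⟩ := indep k p q (by rw [e', map_mul, psi_t, zero_mul])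
  have : g = a := mul_left_cancel₀ (t_ne k) (by simpa using e)
  exact this ▸ ha

lemma of_pow (N : ℕ) {g : B k} (h : X 0 ^ N * g ∈ A k) : g ∈ A k := by
  induction N with
  | zero => simpa using h
  | succ n ih =>
    apply ih
    apply of_t_mul
    rw [← mul_assoc, ← pow_succ']; exact h

end KerAux

/-- For `n = 3`, the kernel of the Weitzenböck derivation on
`k[x_0,…,x_3]` is generated by `t`, `dv`, `tr`, `c`. -/
theorem kernel_n3 (k : Type*) [Field k] [CharZero k] :
    ∀ f : MvPolynomial (Fin (3 + 1)) k,
      weitz k 3 f = 0 ↔ f ∈ Algebra.adjoin k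
        ({X 0,
          X 1 ^ 2 - 2 * X 0 * X 2,
          X 1 ^ 3 - 3 * X 0 * X 1 * X 2 + 3 * X 0 ^ 2 * X 3,
          -18 * X 0 * X 1 * X 2 * X 3 + 8 * X 0 * X 2 ^ 3 + 9 * X 0 ^ 2 * X 3 ^ 2
            + 6 * X 1 ^ 3 * X 3 - 3 * X 1 ^ 2 * X 2 ^ 2} :
          Set (MvPolynomial (Fin (3 + 1)) k)) := by
  intro f
  constructor
  · intro hf
    obtain ⟨N, hN⟩ := KerAux.tpow_mem k hf
    exact KerAux.of_pow k N hN
  · intro hf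
    exact KerAux.d_of_mem k hf
end

section
/- For n = 4 (the polynomial ring k[x_0, x_1, x_2, x_3, x_4] with Weitzenböck derivation d(x_i) = x_{i−1}, d(x_0) = 0), the kernel of d equals the k-subalgebra generated by the five polynomials t = x_0, d_1 = x_1^2 − 2·t·x_2, d_2 = −2·t·x_4 + 2·x_1·x_3 − x_2^2, tr_1 = x_1^3 − 3·t·x_1·x_2 + 3·t^2·x_3, and tr_2 = 12·t·x_2·x_4 − 9·t·x_3^2 − 6·x_1^2·x_4 + 6·x_1·x_2·x_3 − 2·x_2^3: k[x_0,…,x_4]^d = k[t, d_1, d_2, tr_1, tr_2]. -/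
open MvPolynomial Finset

namespace KernelN4

variable {k : Type*} [Field k] [CharZero k]

/-- The subalgebra generated by the five invariants. -/
noncomputable abbrev A (k : Type*) [Field k] [CharZero k] :
    Subalgebra k (MvPolynomial (Fin (4 + 1)) k) :=
  Algebra.adjoin k
        ({X 0,
          X 1 ^ 2 - 2 * X 0 * X 2,
          -2 * X 0 * X 4 + 2 * X 1 * X 3 - X 2 ^ 2,
          X 1 ^ 3 - 3 * X 0 * X 1 * X 2 + 3 * X 0 ^ 2 * X 3,
          12 * X 0 * X 2 * X 4 - 9 * X 0 * X 3 ^ 2 - 6 * X 1 ^ 2 * X 4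
            + 6 * X 1 * X 2 * X 3 - 2 * X 2 ^ 3} :
          Set (MvPolynomial (Fin (4 + 1)) k))

noncomputable def g0 (k : Type*) [Field k] : MvPolynomial (Fin (4 + 1)) k := X 0
noncomputable def g1 (k : Type*) [Field k] : MvPolynomial (Fin (4 + 1)) k :=
  X 1 ^ 2 - 2 * X 0 * X 2
noncomputable def g2 (k : Type*) [Field k] : MvPolynomial (Fin (4 + 1)) k :=
  -2 * X 0 * X 4 + 2 * X 1 * X 3 - X 2 ^ 2
noncomputable def g3 (k : Type*) [Field k] : MvPolynomial (Fin (4 + 1)) k :=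
  X 1 ^ 3 - 3 * X 0 * X 1 * X 2 + 3 * X 0 ^ 2 * X 3
noncomputable def g4 (k : Type*) [Field k] : MvPolynomial (Fin (4 + 1)) k :=
  12 * X 0 * X 2 * X 4 - 9 * X 0 * X 3 ^ 2 - 6 * X 1 ^ 2 * X 4
            + 6 * X 1 * X 2 * X 3 - 2 * X 2 ^ 3

theorem A_eq : A k = Algebra.adjoin k {g0 k, g1 k, g2 k, g3 k, g4 k} := rfl

theorem mem0 : g0 k ∈ A k := by rw [A_eq]; exact Algebra.subset_adjoin (by simp)
theorem mem1 : g1 k ∈ A k := by rw [A_eq]; exact Algebra.subset_adjoin (by simp)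
theorem mem2 : g2 k ∈ A k := by rw [A_eq]; exact Algebra.subset_adjoin (by simp)
theorem mem3 : g3 k ∈ A k := by rw [A_eq]; exact Algebra.subset_adjoin (by simp)
theorem mem4 : g4 k ∈ A k := by rw [A_eq]; exact Algebra.subset_adjoin (by simp)

theorem syzygy : g3 k ^ 2 = g1 k ^ 3 + g0 k * (3 * g0 k * g1 k * g2 k - g0 k ^ 2 * g4 k) := by
  simp only [g0, g1, g2, g3, g4]; ring

theorem w0 : weitz k 4 (X 0) = 0 := by simp [weitz, mkDerivation_X]
theorem w1 : weitz k 4 (X 1) = X 0 := by simp [weitz, mkDerivation_X]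
theorem w2 : weitz k 4 (X 2) = X 1 := by simp [weitz, mkDerivation_X]
theorem w3 : weitz k 4 (X 3) = X 2 := by simp [weitz, mkDerivation_X]
theorem w4 : weitz k 4 (X 4) = X 3 := by simp [weitz, mkDerivation_X]

theorem c2 : weitz k 4 2 = 0 := Derivation.map_natCast _ 2
theorem c3 : weitz k 4 3 = 0 := Derivation.map_natCast _ 3
theorem c6 : weitz k 4 6 = 0 := Derivation.map_natCast _ 6
theorem c9 : weitz k 4 9 = 0 := Derivation.map_natCast _ 9
theorem c12 : weitz k 4 12 = 0 := Derivation.map_natCast _ 12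

theorem A_ker {f : MvPolynomial (Fin (4 + 1)) k} (hf : f ∈ A k) : weitz k 4 f = 0 := by
  rw [A_eq] at hf
  induction hf using Algebra.adjoin_induction with
  | mem x hx =>
    simp only [Set.mem_insert_iff, Set.mem_singleton_iff] at hx
    rcases hx with rfl | rfl | rfl | rfl | rfl <;>
    simp only [g0, g1, g2, g3, g4, map_add, map_sub, map_neg, Derivation.leibniz,
      Derivation.leibniz_pow, w0, w1, w2, w3, w4, c2, c3, c6, c9, c12, smul_eq_mul, nsmul_eq_mul] <;>
    push_cast <;> ring
  | algebraMap r => simp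
  | add x y _ _ hx hy => simp [hx, hy]
  | mul x y _ _ hx hy => simp [hx, hy]

/-- value at `x_1` of a polynomial over `A` -/
noncomputable abbrev ev (q : Polynomial (A k)) : MvPolynomial (Fin (4 + 1)) k :=
  Polynomial.aeval (X 1 : MvPolynomial (Fin (4 + 1)) k) q

theorem w_ev (q : Polynomial (A k)) :
    weitz k 4 (ev q) = X 0 * ev (Polynomial.derivative q) := by
  induction q using Polynomial.induction_on' with
  | add p q hp hq => simp only [map_add, hp, hq, mul_add, ev] at *
  | monomial n a =>
    have ha := A_ker a.2
    simp only [ev, Polynomial.aeval_monomial, Polynomial.derivative_monomial, Derivation.leibniz,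
      Derivation.leibniz_pow, w1, smul_eq_mul, nsmul_eq_mul]
    have : weitz k 4 (algebraMap (A k) _ a) = 0 := ha
    rw [this]
    simp only [map_mul, map_natCast]
    ring

theorem ev_inj (n : ℕ) : ∀ q : Polynomial (A k), q.natDegree ≤ n → ev q = 0 → q = 0 := by
  induction n with
  | zero =>
    intro q hq h
    rw [Polynomial.eq_C_of_natDegree_le_zero hq] at h ⊢
    simp only [ev, Polynomial.aeval_C] at h
    have : q.coeff 0 = 0 := Subtype.ext h
    rw [this, map_zero]
  | succ n ih =>
    intro q hq h
    have h1 := w_ev q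
    rw [h, map_zero] at h1
    have h2 : ev (Polynomial.derivative q) = 0 := by
      rcases mul_eq_zero.1 h1.symm with h | h
      · exact absurd h (X_ne_zero 0)
      · exact h
    have h3 := ih _ ((Polynomial.natDegree_derivative_le q).trans (by omega)) h2
    have h4 := Polynomial.derivative_eq_zero.1 h3
    rw [Polynomial.eq_C_of_natDegree_le_zero h4.le] at h ⊢
    simp only [ev, Polynomial.aeval_C] at h
    have : q.coeff 0 = 0 := Subtype.ext h
    rw [this, map_zero]

theorem ev_ker (q : Polynomial (A k)) (h : weitz k 4 (ev q) = 0) : ev q ∈ A k := by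
  rw [w_ev] at h
  have h2 : ev (Polynomial.derivative q) = 0 := by
    rcases mul_eq_zero.1 h with h | h
    · exact absurd h (X_ne_zero 0)
    · exact h
  have h3 := ev_inj _ _ le_rfl h2
  have h4 := Polynomial.derivative_eq_zero.1 h3
  rw [Polynomial.eq_C_of_natDegree_le_zero h4.le]
  simp only [ev, Polynomial.aeval_C]
  exact (q.coeff 0).2

/-- the subring `A[x_1]` -/
noncomputable abbrev B (k : Type*) [Field k] [CharZero k] :
    Subalgebra k (MvPolynomial (Fin (4 + 1)) k) :=
  ((Polynomial.aeval (R := A k) (X 1 : MvPolynomial (Fin (4 + 1)) k)).restrictScalars k).range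

theorem A_le_B {f : MvPolynomial (Fin (4 + 1)) k} (hf : f ∈ A k) : f ∈ B k :=
  ⟨Polynomial.C ⟨f, hf⟩, by simp⟩

theorem X1_mem : (X 1 : MvPolynomial (Fin (4 + 1)) k) ∈ B k := ⟨Polynomial.X, by simp⟩

theorem denomC (c : k) : (C c : MvPolynomial (Fin (4 + 1)) k) ∈ B k := (B k).algebraMap_mem c

theorem half {S : Subalgebra k (MvPolynomial (Fin (4 + 1)) k)} {n : ℕ} (hn : n ≠ 0)
    {f : MvPolynomial (Fin (4 + 1)) k} (h : (n : MvPolynomial (Fin (4 + 1)) k) * f ∈ S) :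
    f ∈ S := by
  have h2 := S.smul_mem h ((n : k)⁻¹)
  have : ((n : k)⁻¹) • ((n : MvPolynomial (Fin (4 + 1)) k) * f) = f := by
    rw [← nsmul_eq_mul, ← Nat.cast_smul_eq_nsmul k, smul_smul, inv_mul_cancel₀, one_smul]
    exact_mod_cast hn
  rwa [this] at h2

theorem two_X2 : (X 0 * X 2 : MvPolynomial (Fin (4 + 1)) k) ∈ B k := by
  refine half (n := 2) two_ne_zero ?_
  have : ((2 : ℕ) : MvPolynomial (Fin (4 + 1)) k) * (X 0 * X 2) = X 1 ^ 2 - g1 k := by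
    simp only [g1]; push_cast; ring
  rw [this]
  exact sub_mem (pow_mem X1_mem _) (A_le_B mem1)

theorem three_X3 : (X 0 ^ 2 * X 3 : MvPolynomial (Fin (4 + 1)) k) ∈ B k := by
  refine half (n := 3) three_ne_zero ?_
  have : ((3 : ℕ) : MvPolynomial (Fin (4 + 1)) k) * (X 0 ^ 2 * X 3)
      = g3 k - X 1 ^ 3 + 3 * (X 1 * (X 0 * X 2)) := by
    simp only [g3]; push_cast; ring
  rw [this]
  exact add_mem (sub_mem (A_le_B mem3) (pow_mem X1_mem _))
    (mul_mem (ofNat_mem _ 3) (mul_mem X1_mem two_X2))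

theorem X0_mem : (X 0 : MvPolynomial (Fin (4 + 1)) k) ∈ B k := A_le_B mem0

theorem four_X4 : (X 0 ^ 3 * X 4 : MvPolynomial (Fin (4 + 1)) k) ∈ B k := by
  refine half (n := 2) two_ne_zero ?_
  have : ((2 : ℕ) : MvPolynomial (Fin (4 + 1)) k) * (X 0 ^ 3 * X 4)
      = 2 * (X 1 * (X 0 ^ 2 * X 3)) - (X 0 * X 2) ^ 2 - X 0 ^ 2 * g2 k := by
    simp only [g2]; push_cast; ring
  rw [this]
  exact sub_mem (sub_mem (mul_mem (ofNat_mem _ 2) (mul_mem X1_mem three_X3)) (pow_mem two_X2 _))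
    (mul_mem (pow_mem X0_mem _) (A_le_B mem2))

theorem exists_denom (f : MvPolynomial (Fin (4 + 1)) k) : ∃ N : ℕ, X 0 ^ N * f ∈ B k := by
  induction f using MvPolynomial.induction_on with
  | C a => exact ⟨0, by simpa using denomC a⟩
  | add p q hp hq =>
    obtain ⟨n, hn⟩ := hp
    obtain ⟨m, hm⟩ := hq
    refine ⟨n + m, ?_⟩
    have : (X 0 ^ (n + m) * (p + q) : MvPolynomial (Fin (4 + 1)) k)
        = X 0 ^ m * (X 0 ^ n * p) + X 0 ^ n * (X 0 ^ m * q) := by ring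
    rw [this]
    exact add_mem (mul_mem (pow_mem X0_mem _) hn) (mul_mem (pow_mem X0_mem _) hm)
  | mul_X p i hp =>
    obtain ⟨n, hn⟩ := hp
    have key : ∃ m : ℕ, (X 0 ^ m * X i : MvPolynomial (Fin (4 + 1)) k) ∈ B k := by
      fin_cases i
      · exact ⟨0, by simpa using X0_mem⟩
      · exact ⟨0, by simpa using X1_mem⟩
      · exact ⟨1, by simpa using two_X2⟩
      · exact ⟨2, three_X3⟩
      · exact ⟨3, four_X4⟩
    obtain ⟨m, hm⟩ := key
    refine ⟨n + m, ?_⟩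
    have : (X 0 ^ (n + m) * (p * X i) : MvPolynomial (Fin (4 + 1)) k)
        = (X 0 ^ n * p) * (X 0 ^ m * X i) := by ring
    rw [this]
    exact mul_mem hn hm

/-- evaluation at `d_1, d_2, tr_2` -/
noncomputable def ph (k : Type*) [Field k] :
    MvPolynomial (Fin 3) k →ₐ[k] MvPolynomial (Fin (4 + 1)) k :=
  aeval ![g1 k, g2 k, g4 k]

theorem ph_mem (p : MvPolynomial (Fin 3) k) : ph k p ∈ A k := by
  induction p using MvPolynomial.induction_on with
  | C a => rw [ph, aeval_C]; exact (A k).algebraMap_mem a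
  | add p q hp hq => rw [map_add]; exact add_mem hp hq
  | mul_X p i hp =>
    rw [map_mul]
    refine mul_mem hp ?_
    rw [ph, aeval_X]
    fin_cases i
    · exact mem1
    · exact mem2
    · exact mem4

theorem normal_form {f : MvPolynomial (Fin (4 + 1)) k} (hf : f ∈ A k) :
    ∃ a ∈ A k, ∃ p q, f = g0 k * a + ph k p + g3 k * ph k q := by
  rw [A_eq] at hf
  induction hf using Algebra.adjoin_induction with
  | mem x hx =>
    simp only [Set.mem_insert_iff, Set.mem_singleton_iff] at hx
    rcases hx with rfl | rfl | rfl | rfl | rfl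
    · exact ⟨1, one_mem _, 0, 0, by simp⟩
    · exact ⟨0, zero_mem _, X 0, 0, by simp [ph]⟩
    · exact ⟨0, zero_mem _, X 1, 0, by simp [ph]⟩
    · exact ⟨0, zero_mem _, 0, 1, by simp⟩
    · exact ⟨0, zero_mem _, X 2, 0, by simp [ph]⟩
  | algebraMap r => exact ⟨0, zero_mem _, C r, 0, by simp [ph]⟩
  | add x y _ _ hx hy =>
    obtain ⟨a, ha, p, q, rfl⟩ := hx
    obtain ⟨b, hb, r, s, rfl⟩ := hy
    exact ⟨a + b, add_mem ha hb, p + r, q + s, by simp only [map_add]; ring⟩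
  | mul x y _ hy' hx hy =>
    obtain ⟨a, ha, p, q, rfl⟩ := hx
    obtain ⟨b, hb, r, s, hy⟩ := hy
    rw [← A_eq] at hy'
    refine ⟨a * y + (ph k p + g3 k * ph k q) * b
        + (3 * g0 k * g1 k * g2 k - g0 k ^ 2 * g4 k) * (ph k q * ph k s), ?_,
      p * r + X 0 ^ 3 * (q * s), p * s + q * r, ?_⟩
    · refine add_mem (add_mem (mul_mem ha hy') (mul_mem (add_mem (ph_mem _)
        (mul_mem mem3 (ph_mem _))) hb)) (mul_mem (sub_mem (mul_mem (mul_mem (mul_mem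
          (ofNat_mem _ 3) mem0) mem1) mem2) (mul_mem (pow_mem mem0 _) mem4))
          (mul_mem (ph_mem _) (ph_mem _)))
    · have h0 : ph k (X 0) = g1 k := by simp [ph]
      simp only [map_add, map_mul, map_pow, h0]
      linear_combination (ph k p + g3 k * ph k q) * hy + (ph k q * ph k s) * syzygy (k := k)

theorem eval_ph (v : Fin (4 + 1) → k) (p : MvPolynomial (Fin 3) k) :
    eval v (ph k p) = eval ![eval v (g1 k), eval v (g2 k), eval v (g4 k)] p := by
  induction p using MvPolynomial.induction_on with
  | C a => simp [ph]
  | add p q hp hq => simp only [map_add, hp, hq]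
  | mul_X p i hp =>
    simp only [map_mul, hp]
    congr 1
    fin_cases i <;> simp [ph]

theorem indep {f : MvPolynomial (Fin (4 + 1)) k} {p q : MvPolynomial (Fin 3) k}
    (h : g0 k * f = ph k p + g3 k * ph k q) : p = 0 ∧ q = 0 := by
  have key : ∀ x b c : k, x ≠ 0 →
      eval ![x ^ 2, b, c] p + x ^ 3 * eval ![x ^ 2, b, c] q = 0 := by
    intro x b c hx
    have h1 := congrArg (eval ![0, x, 0, b / (2 * x), - c / (6 * x ^ 2)]) h
    simp only [map_add, map_mul, eval_ph] at h1
    have e0 : eval ![0, x, 0, b / (2 * x), - c / (6 * x ^ 2)] (g0 k) = 0 := by simp [g0]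
    have e1 : eval ![0, x, 0, b / (2 * x), - c / (6 * x ^ 2)] (g1 k) = x ^ 2 := by simp [g1]
    have e2 : eval ![0, x, 0, b / (2 * x), - c / (6 * x ^ 2)] (g2 k) = b := by
      simp [g2]; field_simp
    have e3 : eval ![0, x, 0, b / (2 * x), - c / (6 * x ^ 2)] (g3 k) = x ^ 3 := by simp [g3]
    have e4 : eval ![0, x, 0, b / (2 * x), - c / (6 * x ^ 2)] (g4 k) = c := by
      simp [g4]; field_simp
    rw [e0, e1, e2, e3, e4, zero_mul] at h1
    exact h1.symm
  have both : ∀ x b c : k, x ≠ 0 →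
      eval ![x ^ 2, b, c] p = 0 ∧ eval ![x ^ 2, b, c] q = 0 := by
    intro x b c hx
    have h1 := key x b c hx
    have h2 := key (-x) b c (neg_ne_zero.2 hx)
    rw [neg_sq] at h2
    have h3 : (2 * x ^ 3) * eval ![x ^ 2, b, c] q = 0 := by linear_combination h1 - h2
    have h4 : eval ![x ^ 2, b, c] q = 0 :=
      (mul_eq_zero.1 h3).resolve_left (mul_ne_zero two_ne_zero (pow_ne_zero _ hx))
    rw [h4] at h1
    exact ⟨by simpa using h1, h4⟩
  have inf : (Set.range fun n : ℕ => ((n + 1 : ℕ) : k) ^ 2).Infinite := by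
    apply Set.infinite_range_of_injective
    intro a b hab
    simp only at hab
    have : (a + 1) ^ 2 = (b + 1) ^ 2 := by exact_mod_cast hab
    have := Nat.pow_left_injective two_ne_zero this
    omega
  have vanish : ∀ r : MvPolynomial (Fin 3) k,
      (∀ x b c : k, x ≠ 0 → eval ![x ^ 2, b, c] r = 0) → r = 0 := by
    intro r hr
    refine MvPolynomial.funext_set
      (fun i : Fin 3 => if i = 0 then Set.range fun n : ℕ => ((n + 1 : ℕ) : k) ^ 2 else Set.univ)
      ?_ ?_
    · intro i
      by_cases hi : i = 0
      · simpa [hi] using inf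
      · simpa [hi] using Set.infinite_univ
    · intro v hv
      have hv0 := hv 0 (Set.mem_univ _)
      simp only [if_true] at hv0
      obtain ⟨n, hn⟩ := hv0
      have := hr ((n + 1 : ℕ) : k) (v 1) (v 2) (Nat.cast_ne_zero.2 (by omega))
      have hv' : v = ![((n + 1 : ℕ) : k) ^ 2, v 1, v 2] := by
        ext i
        fin_cases i
        · exact hn.symm
        · rfl
        · rfl
      rw [hv', this, map_zero]
  exact ⟨vanish p fun x b c hx => (both x b c hx).1, vanish q fun x b c hx => (both x b c hx).2⟩

theorem cancel {f : MvPolynomial (Fin (4 + 1)) k} (h : X 0 * f ∈ A k) : f ∈ A k := by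
  obtain ⟨a, ha, p, q, e⟩ := normal_form h
  have e' : g0 k * (f - a) = ph k p + g3 k * ph k q := by
    have : (X 0 : MvPolynomial (Fin (4 + 1)) k) = g0 k := rfl
    rw [this] at e
    linear_combination e
  obtain ⟨rfl, rfl⟩ := indep e'
  rw [map_zero, mul_zero, add_zero] at e'
  rcases mul_eq_zero.1 e' with h | h
  · exact absurd h (X_ne_zero 0)
  · rwa [sub_eq_zero.1 h]

theorem cancel_pow {f : MvPolynomial (Fin (4 + 1)) k} (n : ℕ) (h : X 0 ^ n * f ∈ A k) :
    f ∈ A k := by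
  induction n with
  | zero => simpa using h
  | succ n ih =>
    rw [pow_succ', mul_assoc] at h
    exact ih (cancel h)

end KernelN4

/-- For `n = 4`, the kernel of the Weitzenböck derivation on
`k[x_0,…,x_4]` is generated by `t`, `d_1`, `d_2`, `tr_1`, `tr_2`. -/
theorem kernel_n4 (k : Type*) [Field k] [CharZero k] :
    ∀ f : MvPolynomial (Fin (4 + 1)) k,
      weitz k 4 f = 0 ↔ f ∈ Algebra.adjoin k
        ({X 0,
          X 1 ^ 2 - 2 * X 0 * X 2,
          -2 * X 0 * X 4 + 2 * X 1 * X 3 - X 2 ^ 2,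
          X 1 ^ 3 - 3 * X 0 * X 1 * X 2 + 3 * X 0 ^ 2 * X 3,
          12 * X 0 * X 2 * X 4 - 9 * X 0 * X 3 ^ 2 - 6 * X 1 ^ 2 * X 4
            + 6 * X 1 * X 2 * X 3 - 2 * X 2 ^ 3} :
          Set (MvPolynomial (Fin (4 + 1)) k)) := by
  intro f
  refine ⟨fun hf => ?_, fun hf => KernelN4.A_ker hf⟩
  obtain ⟨n, q, hq⟩ := KernelN4.exists_denom f
  have hq' : KernelN4.ev q = X 0 ^ n * f := hq
  refine KernelN4.cancel_pow n ?_
  rw [← hq']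
  refine KernelN4.ev_ker q ?_
  rw [hq', Derivation.leibniz, Derivation.leibniz_pow, hf, KernelN4.w0]
  simp
end
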